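/- arXiv:1411.4597 — 6 statements merged into one kernel-verified Lean document; each statement's English description precedes it below -/
import Mathlib

section
/- Let C be a category with pullbacks and m : X → Z an arrow of C. Then the following are equivalent: (1) the pullback functor pb_m : C↓Z → C↓X has a right adjoint G such that the counit of the adjunction is a natural isomorphism; (2) for every arrow f : Y → X there exist composable arrows n : Y → W and h : W → Z forming a final pullback complement of (f, m). Moreover, if these hold then for each f : Y → X the object h of C↓Z is isomorphic to G(f). -/
open CategoryTheory CategoryTheory.Limits

universe v u

/-- A stable system of monos in a category `C`: a class of monomorphisms containing all
isomorphisms, closed under composition, and stable under pullback. -/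
structure StableSystemOfMonos (C : Type u) [Category.{v} C] where
  mem : ∀ {X Y : C}, (X ⟶ Y) → Prop
  mono_of_mem : ∀ {X Y : C} {f : X ⟶ Y}, mem f → Mono f
  mem_of_isIso : ∀ {X Y : C} (f : X ⟶ Y), IsIso f → mem f
  mem_comp : ∀ {X Y Z : C} {f : X ⟶ Y} {g : Y ⟶ Z}, mem f → mem g → mem (f ≫ g)
  mem_of_isPullback : ∀ {W X Y Z : C} {m : X ⟶ Z} {f : Y ⟶ Z} {f' : W ⟶ X} {m' : W ⟶ Y},
    IsPullback f' m' m f → mem m → mem m'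

/-- An `M`-partial map classifier `(T, η)` for a category `C`: for every mono `m : X ⟶ Z`
in `M` and every arrow `f : X ⟶ Y` there is a unique arrow `φ(m,f) : Z ⟶ T(Y)` such that
`f ≫ η_Y = m ≫ φ(m,f)` and this commuting square is a pullback. -/
structure MPartialMapClassifier {C : Type u} [Category.{v} C] (M : StableSystemOfMonos C) where
  T : C ⥤ C
  η : 𝟭 C ⟶ T
  φ : ∀ {X Y Z : C} (m : X ⟶ Z), M.mem m → (X ⟶ Y) → (Z ⟶ T.obj Y)
  isPullback_φ : ∀ {X Y Z : C} (m : X ⟶ Z) (hm : M.mem m) (f : X ⟶ Y),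
    IsPullback f m (η.app Y) (φ m hm f)
  φ_uniq : ∀ {X Y Z : C} (m : X ⟶ Z) (hm : M.mem m) (f : X ⟶ Y) (ψ : Z ⟶ T.obj Y),
    IsPullback f m (η.app Y) ψ → ψ = φ m hm f

/-- `(n : K ⟶ D, a : D ⟶ G)` is a final pullback complement of `(l : K ⟶ L, m : L ⟶ G)`:
the square `l ≫ m = n ≫ a` is a pullback, and for every pullback square `d ≫ m = e ≫ f`
and every arrow `h : K' ⟶ K` with `h ≫ l = d` there is a unique `g : D' ⟶ D` with
`g ≫ a = f` and `e ≫ g = h ≫ n`. -/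
def IsFinalPullbackComplement {C : Type u} [Category.{v} C] {K L D G : C}
    (l : K ⟶ L) (m : L ⟶ G) (n : K ⟶ D) (a : D ⟶ G) : Prop :=
  IsPullback l n m a ∧
  ∀ {K' D' : C} (d : K' ⟶ L) (e : K' ⟶ D') (f : D' ⟶ G) (h : K' ⟶ K),
    IsPullback d e m f → h ≫ l = d →
    ∃! g : D' ⟶ D, g ≫ a = f ∧ e ≫ g = h ≫ n
theorem fpbc_key {C : Type u} [Category.{v} C] [HasPullbacks C]
    {X Z : C} (m : X ⟶ Z) {A P : Over Z} {B : Over X}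
    (ε : (Over.pullback m).obj P ⟶ B) (n : B.left ⟶ P.left)
    (hn : ε.left ≫ n = pullback.fst P.hom m) (hp : IsPullback B.hom n m P.hom)
    (k : (Over.pullback m).obj A ⟶ B) (g : A ⟶ P) :
    (Over.pullback m).map g ≫ ε = k ↔ pullback.fst A.hom m ≫ g.left = k.left ≫ n := by
  constructor
  · rintro rfl
    rw [Over.comp_left, Category.assoc, hn]
    exact (pullback.lift_fst _ _ _).symm
  · intro h
    apply Over.OverMorphism.ext
    apply hp.hom_ext
    · rw [Over.w, Over.w]
    · rw [← h, Over.comp_left, Category.assoc, hn]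
      exact pullback.lift_fst _ _ _

theorem fpbc_univ {C : Type u} [Category.{v} C] [HasPullbacks C]
    {X Z : C} (m : X ⟶ Z) {Y W : C} (f : Y ⟶ X) (n : Y ⟶ W) (h : W ⟶ Z)
    (H : IsFinalPullbackComplement f m n h) :
    ∃ ε : (Over.pullback m).obj (Over.mk h) ⟶ Over.mk f, IsIso ε ∧
      ∀ (A : Over Z) (k : (Over.pullback m).obj A ⟶ Over.mk f),
        ∃! g : A ⟶ Over.mk h, (Over.pullback m).map g ≫ ε = k := by
  obtain ⟨hp, hu⟩ := H
  let i : pullback h m ≅ Y :=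
    (IsPullback.of_hasPullback h m).flip.isoIsPullback _ _ hp
  have hi1 : i.hom ≫ f = pullback.snd h m := IsPullback.isoIsPullback_hom_fst ..
  have hi2 : i.hom ≫ n = pullback.fst h m := IsPullback.isoIsPullback_hom_snd ..
  let ι : (Over.pullback m).obj (Over.mk h) ≅ Over.mk f := Over.isoMk i hi1
  refine ⟨ι.hom, inferInstance, fun A k => ?_⟩
  obtain ⟨g, ⟨hg1, hg2⟩, hg⟩ := hu (pullback.snd A.hom m) (pullback.fst A.hom m) A.hom k.left
    (IsPullback.of_hasPullback A.hom m).flip (Over.w k)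
  have key := fpbc_key m (A := A) ι.hom n hi2 hp k
  refine ⟨Over.homMk g hg1, (key _).2 hg2, fun g' hg' => ?_⟩
  apply Over.OverMorphism.ext
  exact hg _ ⟨Over.w g', (key _).1 hg'⟩

theorem fpbc_of_univ {C : Type u} [Category.{v} C] [HasPullbacks C]
    {X Z : C} (m : X ⟶ Z) {Y : C} (f : Y ⟶ X) (P : Over Z)
    (ε : (Over.pullback m).obj P ⟶ Over.mk f) [IsIso ε]
    (hu : ∀ (A : Over Z) (k : (Over.pullback m).obj A ⟶ Over.mk f),
        ∃! g : A ⟶ P, (Over.pullback m).map g ≫ ε = k) :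
    ∃ n : Y ⟶ P.left, IsFinalPullbackComplement f m n P.hom := by
  let ι : (Over.pullback m).obj P ≅ Over.mk f := asIso ε
  let i : pullback P.hom m ≅ Y := (Over.forget X).mapIso ι
  have hi : i.hom ≫ f = pullback.snd P.hom m := Over.w ε
  have hn : i.hom ≫ (i.inv ≫ pullback.fst P.hom m) = pullback.fst P.hom m := by simp
  have hp : IsPullback f (i.inv ≫ pullback.fst P.hom m) m P.hom :=
    IsPullback.of_iso (IsPullback.of_hasPullback P.hom m).flip i (Iso.refl _) (Iso.refl _)
      (Iso.refl _) (by simp [hi]) (by simp) (by simp) (by simp)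
  refine ⟨i.inv ≫ pullback.fst P.hom m, hp, ?_⟩
  intro K' D' d e f' h hd hh
  let j : pullback f' m ≅ K' := (IsPullback.of_hasPullback f' m).flip.isoIsPullback _ _ hd
  have hj1 : j.hom ≫ d = pullback.snd f' m := IsPullback.isoIsPullback_hom_fst ..
  have hj2 : j.hom ≫ e = pullback.fst f' m := IsPullback.isoIsPullback_hom_snd ..
  let k : (Over.pullback m).obj (Over.mk f') ⟶ Over.mk f :=
    Over.homMk (j.hom ≫ h) (by
      show (j.hom ≫ h) ≫ f = pullback.snd f' m
      rw [Category.assoc, hh, hj1])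
  have key := fpbc_key m (A := Over.mk f') ε _ hn hp k
  have key2 : ∀ g : D' ⟶ P.left, pullback.fst f' m ≫ g =
      (j.hom ≫ h) ≫ (i.inv ≫ pullback.fst P.hom m) ↔
      e ≫ g = h ≫ (i.inv ≫ pullback.fst P.hom m) := by
    intro g
    rw [← hj2, Category.assoc, Category.assoc, cancel_epi]
  obtain ⟨g, hg1, hg⟩ := hu _ k
  refine ⟨g.left, ⟨Over.w g, (key2 _).1 ((key _).1 hg1)⟩, ?_⟩
  rintro g' ⟨h1, h2⟩
  exact congrArg (fun t => t.left) (hg (Over.homMk g' h1) ((key _).2 ((key2 _).2 h2)))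

theorem fpbc_adj_univ {C : Type u} [Category.{v} C] [HasPullbacks C]
    {X Z : C} (m : X ⟶ Z) (G : Over X ⥤ Over Z) (adj : Over.pullback m ⊣ G) (B : Over X)
    (A : Over Z) (k : (Over.pullback m).obj A ⟶ B) :
    ∃! g : A ⟶ G.obj B, (Over.pullback m).map g ≫ adj.counit.app B = k := by
  refine ⟨adj.homEquiv _ _ k, ?_, ?_⟩
  · simp [← adj.homEquiv_counit]
  · rintro g rfl
    simp [← adj.homEquiv_counit]

theorem fpbc_exists_adj {D E : Type*} [Category D] [Category E] (F : D ⥤ E)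
    (H : ∀ B : E, ∃ (P : D) (ε : F.obj P ⟶ B), IsIso ε ∧
      ∀ (A : D) (k : F.obj A ⟶ B), ∃! g : A ⟶ P, F.map g ≫ ε = k) :
    ∃ (G : E ⥤ D) (adj : F ⊣ G), IsIso adj.counit := by
  choose P ε hε hu using H
  choose l hl hl' using hu
  let e : ∀ A B, (F.obj A ⟶ B) ≃ (A ⟶ P B) := fun A B =>
    { toFun := fun k => l B A k
      invFun := fun g => F.map g ≫ ε B
      left_inv := fun k => hl B A k
      right_inv := fun g => (hl' B A _ g rfl).symm }
  have he : ∀ X' X Y f g, e X' Y (F.map f ≫ g) = f ≫ e X Y g := by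
    intro X' X Y f g
    refine (hl' Y X' _ _ ?_).symm
    have := hl Y X g
    simp only [Functor.map_comp, Category.assoc]
    exact congrArg (F.map f ≫ ·) this
  refine ⟨_, Adjunction.adjunctionOfEquivRight e he, ?_⟩
  have : ∀ B, IsIso ((Adjunction.adjunctionOfEquivRight e he).counit.app B) := by
    intro B
    have : (Adjunction.adjunctionOfEquivRight e he).counit.app B = F.map (𝟙 _) ≫ ε B := by
      rw [← Adjunction.homEquiv_symm_id]
      simp [Adjunction.adjunctionOfEquivRight, e]
    rw [this, CategoryTheory.Functor.map_id, Category.id_comp]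
    exact hε B
  exact NatIso.isIso_of_isIso_app _

/-- the pullback functor `pb_m` has a right adjoint with invertible counit
iff every arrow `f : Y ⟶ X` admits a final pullback complement with `m`; moreover in that
case the final pullback complement object `h` is isomorphic to `G(f)` in `C↓Z`. -/
theorem fpbc_iff_right_adjoint {C : Type u} [Category.{v} C] [HasPullbacks C]
    {X Z : C} (m : X ⟶ Z) :
    ((∃ (G : Over X ⥤ Over Z) (adj : Over.pullback m ⊣ G), IsIso adj.counit) ↔
      ∀ {Y : C} (f : Y ⟶ X), ∃ (W : C) (n : Y ⟶ W) (h : W ⟶ Z),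
        IsFinalPullbackComplement f m n h) ∧
    ∀ (G : Over X ⥤ Over Z) (adj : Over.pullback m ⊣ G), IsIso adj.counit →
      ∀ {Y W : C} (f : Y ⟶ X) (n : Y ⟶ W) (h : W ⟶ Z),
        IsFinalPullbackComplement f m n h →
        Nonempty (Over.mk h ≅ G.obj (Over.mk f)) := by
  refine ⟨⟨?_, ?_⟩, ?_⟩
  · rintro ⟨G, adj, hi⟩ Y f
    obtain ⟨n, hn⟩ := fpbc_of_univ m f (G.obj (Over.mk f)) (adj.counit.app (Over.mk f))
      (fpbc_adj_univ m G adj _)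
    exact ⟨_, n, _, hn⟩
  · intro H
    apply fpbc_exists_adj
    intro B
    obtain ⟨W, n, h, hf⟩ := H B.hom
    exact ⟨Over.mk h, fpbc_univ m B.hom n h hf⟩
  · intro G adj _ Y W f n h hf
    obtain ⟨ε, _, hu⟩ := fpbc_univ m f n h hf
    have hv := fpbc_adj_univ m G adj (Over.mk f)
    obtain ⟨a, ha, -⟩ := hv _ ε
    obtain ⟨b, hb, -⟩ := hu _ (adj.counit.app (Over.mk f))
    refine ⟨⟨a, b, ?_, ?_⟩⟩
    · refine (hu _ ε).unique ?_ (by simp)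
      rw [Functor.map_comp, Category.assoc, hb, ha]
    · refine (hv _ (adj.counit.app (Over.mk f))).unique ?_ (by simp)
      rw [Functor.map_comp, Category.assoc, ha, hb]
end

section
/- Let C be a category with pullbacks, M a stable system of monos of C, and (T, η) an M-partial map classifier for C. Assume C has a terminal object 1 and a strict initial object 0 (every arrow with target 0 has source 0), and that the unique arrow ! : 0 → 1 belongs to M. Then the arrow \overline{!} = φ(!, id_0) : 1 → T(0) is an isomorphism, whose inverse is the unique arrow !_{T(0)} : T(0) → 1; in particular T(0) is isomorphic to the terminal object 1. -/
open CategoryTheory CategoryTheory.Limits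

universe v u

theorem isPullback_strict_aux {C : Type u} [Category.{v} C] [HasInitial C]
    [HasStrictInitialObjects C] {Z W : C} (f : ⊥_ C ⟶ W) (g : Z ⟶ W) :
    IsPullback (𝟙 (⊥_ C)) (initial.to Z) f g := by
  refine ⟨⟨Subsingleton.elim _ _⟩, ⟨PullbackCone.IsLimit.mk _ (fun s => s.fst) ?_ ?_ ?_⟩⟩
  · intro s
    simp
  · intro s
    have : IsIso s.fst := inferInstance
    exact (initialIsInitial.ofIso (asIso s.fst).symm).hom_ext _ _
  · intro s m h1 _
    simpa using h1

/-- with a terminal object `1`, a strict initial object `0` and `! : 0 → 1`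
in `M`, the arrow `\overline{!} = φ(!, id_0) : 1 ⟶ T(0)` is an isomorphism whose inverse
is the unique arrow `T(0) ⟶ 1`; in particular `T(0) ≅ 1`. -/
theorem barBang_isIso {C : Type u} [Category.{v} C] [HasPullbacks C]
    [HasTerminal C] [HasInitial C] [HasStrictInitialObjects C]
    (M : StableSystemOfMonos C) (P : MPartialMapClassifier M)
    (hbang : M.mem (initial.to (⊤_ C))) :
    P.φ (initial.to (⊤_ C)) hbang (𝟙 (⊥_ C)) ≫ terminal.from (P.T.obj (⊥_ C)) = 𝟙 (⊤_ C) ∧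
    terminal.from (P.T.obj (⊥_ C)) ≫ P.φ (initial.to (⊤_ C)) hbang (𝟙 (⊥_ C)) =
      𝟙 (P.T.obj (⊥_ C)) ∧
    IsIso (P.φ (initial.to (⊤_ C)) hbang (𝟙 (⊥_ C))) ∧
    Nonempty (P.T.obj (⊥_ C) ≅ ⊤_ C) := by
  have key : ∀ {Z : C} (a b : Z ⟶ P.T.obj (⊥_ C)), a = b := by
    intro Z a b
    have hm : M.mem (initial.to Z) :=
      M.mem_of_isPullback (isPullback_strict_aux (initial.to (⊤_ C)) (terminal.from Z)) hbang
    rw [P.φ_uniq _ hm (𝟙 _) a (isPullback_strict_aux _ _),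
      P.φ_uniq _ hm (𝟙 _) b (isPullback_strict_aux _ _)]
  have h1 : P.φ (initial.to (⊤_ C)) hbang (𝟙 (⊥_ C)) ≫ terminal.from (P.T.obj (⊥_ C)) =
    𝟙 (⊤_ C) := Subsingleton.elim _ _
  have h2 : terminal.from (P.T.obj (⊥_ C)) ≫ P.φ (initial.to (⊤_ C)) hbang (𝟙 (⊥_ C)) =
      𝟙 (P.T.obj (⊥_ C)) := key _ _
  exact ⟨h1, h2, ⟨_, h1, h2⟩, ⟨⟨_, _, h2, h1⟩⟩⟩
end

section
/- Let C be a category with pullbacks, M a stable system of monos of C, (T, η) an M-partial map classifier for C, with terminal object 1, strict initial object 0, and ! : 0 → 1 in M. Then for every arrow l : K → L, the strict complement of l in T(l), namely the arrow T(l)∖l : T(K)∖K → T(L)∖L induced (with respect to the monos η_K and η_L and the pullback square η_L ∘ l = T(l) ∘ η_K) between the strict complements of η_K and η_L, is an isomorphism. -/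
open CategoryTheory CategoryTheory.Limits

universe v u

variable {C : Type u} [Category.{v} C]

/-- The arrow `false = T(!) ∘ \overline{!} : 1 ⟶ T(1)`, where `\overline{!} = φ(!, id_0)`. -/
noncomputable def falseArrow [HasTerminal C] [HasInitial C] (M : StableSystemOfMonos C)
    (P : MPartialMapClassifier M) (hbang : M.mem (initial.to (⊤_ C))) :
    (⊤_ C) ⟶ P.T.obj (⊤_ C) :=
  P.φ (initial.to (⊤_ C)) hbang (𝟙 (⊥_ C)) ≫ P.T.map (initial.to (⊤_ C))

/-- `i : Gc ⟶ G` is a strict complement of the mono `m : L ⟶ G` in `M`: it is a pullback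
of the characteristic arrow `χ_m = φ(m, !_L)` along `false : 1 ⟶ T(1)`. -/
def IsStrictComplement [HasTerminal C] [HasInitial C] (M : StableSystemOfMonos C)
    (P : MPartialMapClassifier M) (hbang : M.mem (initial.to (⊤_ C)))
    {L G Gc : C} (m : L ⟶ G) (hm : M.mem m) (i : Gc ⟶ G) : Prop :=
  IsPullback i (terminal.from Gc) (P.φ m hm (terminal.from L)) (falseArrow M P hbang)
/-- The partial map `x` has empty domain. -/
def IsBotMap [HasInitial C] {M : StableSystemOfMonos C}
    (P : MPartialMapClassifier M) {Z Y : C} (x : Z ⟶ P.T.obj Y) : Prop :=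
  ∀ ⦃V : C⦄ (p : V ⟶ Y) (n : V ⟶ Z), p ≫ P.η.app Y = n ≫ x → Nonempty (V ⟶ ⊥_ C)

theorem IsBotMap.comp [HasInitial C] {M : StableSystemOfMonos C}
    {P : MPartialMapClassifier M} {W Z Y : C} {x : Z ⟶ P.T.obj Y} (h : IsBotMap P x)
    (w : W ⟶ Z) : IsBotMap P (w ≫ x) := by
  intro V p n e
  exact h p (n ≫ w) (by simpa using e)

theorem IsBotMap.isPullback [HasInitial C] [HasStrictInitialObjects C]
    {M : StableSystemOfMonos C}
    {P : MPartialMapClassifier M} {Z Y : C} {x : Z ⟶ P.T.obj Y} (h : IsBotMap P x) :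
    IsPullback (initial.to Y) (initial.to Z) (P.η.app Y) x := by
  refine ⟨⟨initialIsInitial.hom_ext _ _⟩, ⟨PullbackCone.IsLimit.mk _
    (fun s => (h s.fst s.snd s.condition).some) ?_ ?_ ?_⟩⟩
  · intro s
    have := initialIsInitial.isIso_to (h s.fst s.snd s.condition).some
    exact (initialIsInitial.ofIso (asIso (h s.fst s.snd s.condition).some).symm).hom_ext _ _
  · intro s
    have := initialIsInitial.isIso_to (h s.fst s.snd s.condition).some
    exact (initialIsInitial.ofIso (asIso (h s.fst s.snd s.condition).some).symm).hom_ext _ _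
  · intro s m _ _
    have := initialIsInitial.isIso_to (h s.fst s.snd s.condition).some
    exact (initialIsInitial.ofIso (asIso (h s.fst s.snd s.condition).some).symm).hom_ext _ _

theorem mem_initial_to [HasInitial C] [HasTerminal C] [HasStrictInitialObjects C]
    (M : StableSystemOfMonos C) (hbang : M.mem (initial.to (⊤_ C))) (Z : C) :
    M.mem (initial.to Z) := by
  refine M.mem_of_isPullback (m := initial.to (⊤_ C)) (f := terminal.from Z)
    (f' := 𝟙 _) ?_ hbang
  refine ⟨⟨initialIsInitial.hom_ext _ _⟩, ⟨PullbackCone.IsLimit.mk _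
    (fun s => s.fst) ?_ ?_ ?_⟩⟩
  · intro s
    simp
  · intro s
    have := initialIsInitial.isIso_to s.fst
    exact (initialIsInitial.ofIso (asIso s.fst).symm).hom_ext _ _
  · intro s m _ _
    have := initialIsInitial.isIso_to s.fst
    exact (initialIsInitial.ofIso (asIso s.fst).symm).hom_ext _ _

theorem IsBotMap.eq [HasInitial C] [HasTerminal C] [HasStrictInitialObjects C]
    {M : StableSystemOfMonos C} (hbang : M.mem (initial.to (⊤_ C)))
    {P : MPartialMapClassifier M} {Z Y : C} {x y : Z ⟶ P.T.obj Y} (hx : IsBotMap P x)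
    (hy : IsBotMap P y) : x = y :=
  (P.φ_uniq _ (mem_initial_to M hbang Z) _ x hx.isPullback).trans
    (P.φ_uniq _ (mem_initial_to M hbang Z) _ y hy.isPullback).symm

theorem mono_eta {M : StableSystemOfMonos C} (P : MPartialMapClassifier M) (Y : C) :
    Mono (P.η.app Y) := by
  refine ⟨fun {Z} a b e => ?_⟩
  have h1 := P.isPullback_φ (𝟙 Z) (M.mem_of_isIso _ inferInstance) a
  have h2 := P.isPullback_φ (𝟙 Z) (M.mem_of_isIso _ inferInstance) b
  have e1 : a ≫ P.η.app Y = P.φ (𝟙 Z) (M.mem_of_isIso _ inferInstance) a := by simpa using h1.w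
  have e2 : b ≫ P.η.app Y = P.φ (𝟙 Z) (M.mem_of_isIso _ inferInstance) b := by simpa using h2.w
  have e3 : b ≫ P.η.app Y = 𝟙 Z ≫ P.φ (𝟙 Z) (M.mem_of_isIso _ inferInstance) a := by
    rw [← e1, Category.id_comp]; exact e.symm
  have h := h1.lift_fst b (𝟙 Z) e3
  have h' := h1.lift_snd b (𝟙 Z) e3
  rw [Category.comp_id] at h'
  rw [h', Category.id_comp] at h
  exact h

/-- The canonical point of `T(Y)` obtained from `T(0)`. -/
noncomputable def botPt [HasTerminal C] [HasInitial C] {M : StableSystemOfMonos C}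
    (P : MPartialMapClassifier M) (hbang : M.mem (initial.to (⊤_ C))) (Y : C) :
    (⊤_ C) ⟶ P.T.obj Y :=
  P.φ (initial.to (⊤_ C)) hbang (𝟙 (⊥_ C)) ≫ P.T.map (initial.to Y)

theorem botPt_map [HasTerminal C] [HasInitial C] {M : StableSystemOfMonos C}
    (P : MPartialMapClassifier M) (hbang : M.mem (initial.to (⊤_ C))) {Y Y' : C} (a : Y ⟶ Y') :
    botPt P hbang Y ≫ P.T.map a = botPt P hbang Y' := by
  unfold botPt
  rw [Category.assoc, ← P.T.map_comp]
  congr 2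
  exact initialIsInitial.hom_ext _ _

theorem isBotMap_botPt [HasTerminal C] [HasInitial C] {M : StableSystemOfMonos C}
    (P : MPartialMapClassifier M) (hbang : M.mem (initial.to (⊤_ C))) (Y : C) :
    IsBotMap P (botPt P hbang Y) := by
  intro V v m e
  have key : ∀ {N : C} (a b : Y ⟶ N), v ≫ a = v ≫ b := by
    intro N a b
    have hmono := mono_eta P N
    have aux : ∀ c : Y ⟶ N, (v ≫ c) ≫ P.η.app N = m ≫ botPt P hbang N := by
      intro c
      have nat := P.η.naturality c
      simp only [Functor.id_map] at nat
      rw [Category.assoc]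
      erw [nat]
      rw [← Category.assoc]
      erw [e]
      rw [Category.assoc, botPt_map]
    exact hmono.right_cancellation _ _ ((aux a).trans (aux b).symm)
  have pb := P.isPullback_φ (initial.to (⊤_ C)) hbang (initial.to (⊤_ C))
  have := key (terminal.from Y ≫ P.η.app (⊤_ C))
    (terminal.from Y ≫ P.φ (initial.to (⊤_ C)) hbang (initial.to (⊤_ C)))
  exact ⟨pb.lift (v ≫ terminal.from Y) (v ≫ terminal.from Y) (by simpa using this)⟩

theorem compl_aux [HasTerminal C] [HasInitial C] [HasStrictInitialObjects C]
    {M : StableSystemOfMonos C}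
    (P : MPartialMapClassifier M) (hbang : M.mem (initial.to (⊤_ C))) {K CK : C}
    (hηK : M.mem (P.η.app K)) (iK : CK ⟶ P.T.obj K)
    (h : IsStrictComplement M P hbang (P.η.app K) hηK iK) :
    iK = terminal.from CK ≫ botPt P hbang K ∧
    ∃ s : (⊤_ C) ⟶ CK, s ≫ iK = botPt P hbang K ∧ terminal.from CK ≫ s = 𝟙 CK := by
  unfold IsStrictComplement at h
  have hf : falseArrow M P hbang = botPt P hbang (⊤_ C) := rfl
  rw [hf] at h
  have pb := P.isPullback_φ (P.η.app K) hηK (terminal.from K)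
  have h1 : iK = terminal.from CK ≫ botPt P hbang K := by
    refine IsBotMap.eq hbang ?_ ((isBotMap_botPt P hbang K).comp _)
    intro V p n e
    refine isBotMap_botPt P hbang (⊤_ C) (p ≫ terminal.from K) (n ≫ terminal.from CK) ?_
    rw [Category.assoc, Category.assoc, ← h.w, ← Category.assoc n, ← e, Category.assoc]
    erw [pb.w]
    rfl
  have h2 : botPt P hbang K ≫ P.φ (P.η.app K) hηK (terminal.from K)
      = 𝟙 _ ≫ botPt P hbang (⊤_ C) := by
    refine IsBotMap.eq hbang ?_ ((isBotMap_botPt P hbang _).comp _)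
    intro V p n e
    have e' : p ≫ P.η.app (⊤_ C) = (n ≫ botPt P hbang K) ≫
      P.φ (P.η.app K) hηK (terminal.from K) := by simpa using e
    exact isBotMap_botPt P hbang K (pb.lift p _ e') n (pb.lift_snd p _ e')
  refine ⟨h1, h.lift _ _ h2, h.lift_fst _ _ h2, ?_⟩
  refine h.hom_ext ?_ (terminalIsTerminal.hom_ext _ _)
  rw [Category.assoc, h.lift_fst, Category.id_comp]
  exact h1.symm

/-- for every arrow `l : K ⟶ L`, the strict complement `T(l)∖l` of `l` in
`T(l)` (taken with respect to the monos `η_K`, `η_L` and the pullback naturality square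
`η_L ∘ l = T(l) ∘ η_K`), i.e. the induced arrow `T(K)∖K ⟶ T(L)∖L`, is an isomorphism. -/
theorem strictComplement_Tl_isIso {C : Type u} [Category.{v} C] [HasPullbacks C]
    [HasTerminal C] [HasInitial C] [HasStrictInitialObjects C]
    (M : StableSystemOfMonos C) (P : MPartialMapClassifier M)
    (hbang : M.mem (initial.to (⊤_ C)))
    {K L : C} (l : K ⟶ L)
    (hηK : M.mem (P.η.app K)) (hηL : M.mem (P.η.app L)) :
    ∀ {CK CL : C} (iK : CK ⟶ P.T.obj K) (iL : CL ⟶ P.T.obj L),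
      IsStrictComplement M P hbang (P.η.app K) hηK iK →
      IsStrictComplement M P hbang (P.η.app L) hηL iL →
      (∃ c : CK ⟶ CL, c ≫ iL = iK ≫ P.T.map l) ∧
      ∀ c : CK ⟶ CL, c ≫ iL = iK ≫ P.T.map l → IsIso c := by
  intro CK CL iK iL hK hL
  obtain ⟨eK, sK, hsK, hsK'⟩ := compl_aux P hbang hηK iK hK
  obtain ⟨eL, sL, hsL, hsL'⟩ := compl_aux P hbang hηL iL hL
  refine ⟨⟨terminal.from CK ≫ sL, ?_⟩, ?_⟩
  · rw [Category.assoc, hsL, eK, Category.assoc, botPt_map]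
  · intro c _
    refine ⟨terminal.from CL ≫ sK, ?_, ?_⟩
    · rw [← Category.assoc, ← hsK']
      congr 1
      exact terminalIsTerminal.hom_ext _ _
    · rw [← hsL', ← Category.comp_id c, ← hsL']
      simp only [← Category.assoc]
      congr 1
      exact terminalIsTerminal.hom_ext _ _
end

section
/- Let C be a category with pullbacks, M a stable system of monos of C, (T, η) an M-partial map classifier for C, with terminal object 1, strict initial object 0, and ! : 0 → 1 in M. Let n : K ↣ D and m : L ↣ G be monos in M and l : K → L, g : D → G arrows such that m ∘ l = g ∘ n is a pullback square. Then there exists a unique arrow g∖l : D∖K → G∖L such that (G∖m) ∘ (g∖l) = g ∘ (D∖n), and the resulting square with sides D∖n, g∖l, g, G∖m is a pullback. -/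
open CategoryTheory CategoryTheory.Limits

universe v u

variable {C : Type u} [Category.{v} C]

/-- given monos `n : K ↣ D`, `m : L ↣ G` in `M` and a pullback square
`m ∘ l = g ∘ n`, there is a unique arrow `g∖l : D∖K ⟶ G∖L` between the strict
complements with `(G∖m) ∘ (g∖l) = g ∘ (D∖n)`, and the resulting square is a pullback. -/
theorem strictComplement_exists_unique_isPullback {C : Type u} [Category.{v} C]
    [HasPullbacks C] [HasTerminal C] [HasInitial C] [HasStrictInitialObjects C]
    (M : StableSystemOfMonos C) (P : MPartialMapClassifier M)
    (hbang : M.mem (initial.to (⊤_ C)))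
    {K D L G : C} (n : K ⟶ D) (hn : M.mem n) (m : L ⟶ G) (hm : M.mem m)
    (l : K ⟶ L) (g : D ⟶ G) (hsq : IsPullback l n m g)
    {Dc Gc : C} (iD : Dc ⟶ D) (iG : Gc ⟶ G)
    (hD : IsStrictComplement M P hbang n hn iD)
    (hG : IsStrictComplement M P hbang m hm iG) :
    (∃! c : Dc ⟶ Gc, c ≫ iG = iD ≫ g) ∧
    ∀ c : Dc ⟶ Gc, c ≫ iG = iD ≫ g → IsPullback c iD iG g := by
  have hχ : g ≫ P.φ m hm (terminal.from L) = P.φ n hn (terminal.from K) := by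
    apply P.φ_uniq
    have h := hsq.paste_horiz (P.isPullback_φ m hm (terminal.from L))
    rwa [Subsingleton.elim (l ≫ terminal.from L) (terminal.from K)] at h
  unfold IsStrictComplement at hD hG
  rw [← hχ] at hD
  have uniq : ∀ a b : Dc ⟶ Gc, a ≫ iG = b ≫ iG → a = b := fun a b h =>
    hG.hom_ext h (Subsingleton.elim _ _)
  have w : (iD ≫ g) ≫ P.φ m hm (terminal.from L) =
      terminal.from Dc ≫ falseArrow M P hbang := by
    rw [Category.assoc]; exact hD.w
  refine ⟨⟨hG.lift (iD ≫ g) (terminal.from Dc) w, hG.lift_fst _ _ _, fun c hc =>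
    uniq _ _ (hc.trans (hG.lift_fst _ _ w).symm)⟩, fun c hc => ?_⟩
  refine IsPullback.of_right ?_ hc hG.flip
  rw [Subsingleton.elim (c ≫ terminal.from Gc) (terminal.from Dc)]
  exact hD.flip
end

section
/- Let C be a category with pullbacks, M a stable system of monos of C, and (T, η) an M-partial map classifier for C. Let ρ = (l : K → L, r : K → R, t : K ↣ T_K) be an AGREE rule (t ∈ M) and m : L ↣ G a match in M. Let l' = φ(t,l) : T_K → T(L), m̄ = φ(m, id_L) : G → T(L), and let (g : D → G, n' : D → T_K) be a pullback of (m̄, l'). Then there exists a unique arrow n : K → D such that n' ∘ n = t and g ∘ n = m ∘ l; moreover the square m ∘ l = g ∘ n is a pullback, and n belongs to M. -/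
open CategoryTheory CategoryTheory.Limits

universe v u

/-- in the first phase of an AGREE rewrite step (pullback of
`(m̄, l' = φ(t,l))`), there is a unique arrow `n : K ⟶ D` with `n ≫ n' = t` and
`n ≫ g = l ≫ m`; moreover the square `m ∘ l = g ∘ n` is a pullback and `n ∈ M`. -/
theorem agree_interface_arrow {C : Type u} [Category.{v} C] [HasPullbacks C]
    (M : StableSystemOfMonos C) (P : MPartialMapClassifier M)
    {K L R TK G : C} (l : K ⟶ L) (r : K ⟶ R) (t : K ⟶ TK) (ht : M.mem t)
    (m : L ⟶ G) (hm : M.mem m)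
    {D : C} (g : D ⟶ G) (n' : D ⟶ TK)
    (hpb : IsPullback g n' (P.φ m hm (𝟙 L)) (P.φ t ht l)) :
    (∃! n : K ⟶ D, n ≫ n' = t ∧ n ≫ g = l ≫ m) ∧
    ∀ n : K ⟶ D, (n ≫ n' = t ∧ n ≫ g = l ≫ m) → IsPullback l n m g ∧ M.mem n := by
  have hmP := P.isPullback_φ m hm (𝟙 L)
  have htP := P.isPullback_φ t ht l
  have hmw : m ≫ P.φ m hm (𝟙 L) = P.η.app L := by
    rw [← hmP.w]
    exact Category.id_comp _
  have hcomm : (l ≫ m) ≫ P.φ m hm (𝟙 L) = t ≫ P.φ t ht l := by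
    rw [Category.assoc, hmw]
    exact htP.w
  have htm : Mono t := M.mono_of_mem ht
  refine ⟨⟨hpb.lift (l ≫ m) t hcomm, ⟨hpb.lift_snd _ _ _, hpb.lift_fst _ _ _⟩, ?_⟩, ?_⟩
  · rintro y ⟨h1, h2⟩
    apply hpb.hom_ext
    · rw [h2, hpb.lift_fst]
    · rw [h1, hpb.lift_snd]
  · rintro n ⟨h1, h2⟩
    have key : IsPullback l n m g := by
      refine ⟨⟨h2.symm⟩, ⟨PullbackCone.IsLimit.mk h2.symm
        (fun s => htP.lift s.fst (s.snd ≫ n') ?_) ?_ ?_ ?_⟩⟩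
      · have hs := s.condition
        calc s.fst ≫ P.η.app L = (s.fst ≫ m) ≫ P.φ m hm (𝟙 L) := by
              rw [Category.assoc, hmw]
          _ = (s.snd ≫ n') ≫ P.φ t ht l := by
              rw [hs, Category.assoc, hpb.w, Category.assoc]
      · intro s
        exact htP.lift_fst _ _ _
      · intro s
        apply hpb.hom_ext
        · rw [Category.assoc, h2, ← Category.assoc, htP.lift_fst, s.condition]
        · rw [Category.assoc, h1, htP.lift_snd]
      · intro s k hk1 hk2
        rw [← cancel_mono t, htP.lift_snd, ← hk2, Category.assoc, h1]
    exact ⟨key, M.mem_of_isPullback key hm⟩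
end

section
/- Let C be a category with pullbacks, a stable system of monos M, an M-partial map classifier (T, η), and pushouts along monos in M. Let (l : K → L, r : K → R) be a span rule and m : L ↣ G a match in M. Then G rewrites to H via the SqPO step for (l, r) at m if and only if G rewrites to H via the AGREE step for the rule (l, r, η_K : K ↣ T(K)) at m. -/
open CategoryTheory CategoryTheory.Limits

universe v u

variable {C : Type u} [Category.{v} C]

/-- The SqPO rewrite step `G ⇒ H` for the span rule `(l, r)` at match `m`: a final
pullback complement of `(l, m)` followed by a pushout along `r`. -/
def SqpoStep {K L R G : C} (l : K ⟶ L) (r : K ⟶ R) (m : L ⟶ G) (H : C) : Prop :=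
  ∃ (D : C) (n : K ⟶ D) (a : D ⟶ G) (h : D ⟶ H) (p : R ⟶ H),
    IsFinalPullbackComplement l m n a ∧ IsPushout n r h p

/-- The AGREE rewrite step `G ⇒ H` for the rule `(l, r, t)` at match `m`: a pullback of
`(m̄, φ(t,l))`, the induced interface arrow `n`, then a pushout along `r`. -/
def AgreeStep (M : StableSystemOfMonos C) (P : MPartialMapClassifier M)
    {K L R TK G : C} (l : K ⟶ L) (r : K ⟶ R) (t : K ⟶ TK) (ht : M.mem t)
    (m : L ⟶ G) (hm : M.mem m) (H : C) : Prop :=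
  ∃ (D : C) (g : D ⟶ G) (n' : D ⟶ TK) (n : K ⟶ D) (h : D ⟶ H) (p : R ⟶ H),
    IsPullback g n' (P.φ m hm (𝟙 L)) (P.φ t ht l) ∧
    n ≫ n' = t ∧ n ≫ g = l ≫ m ∧ IsPushout n r h p

theorem agree_fpc (M : StableSystemOfMonos C) (P : MPartialMapClassifier M)
    {K L G D : C} (l : K ⟶ L) (m : L ⟶ G) (hm : M.mem m)
    (hη : M.mem (P.η.app K)) (g : D ⟶ G) (n' : D ⟶ P.T.obj K) (n : K ⟶ D)
    (hD : IsPullback g n' (P.φ m hm (𝟙 L)) (P.φ (P.η.app K) hη l))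
    (h1 : n ≫ n' = P.η.app K) (h2 : n ≫ g = l ≫ m) :
    IsFinalPullbackComplement l m n g := by
  have hl : IsPullback l (P.η.app K) (P.η.app L) (P.φ (P.η.app K) hη l) :=
    P.isPullback_φ (P.η.app K) hη l
  have hmb := P.isPullback_φ m hm (𝟙 L)
  have hn : IsPullback (𝟙 K) n (P.η.app K) n' := by
    refine ⟨⟨by rw [h1]; exact Category.id_comp _⟩, ⟨PullbackCone.IsLimit.mk _ (fun s => s.fst) ?_ ?_ ?_⟩⟩
    · intro s; exact Category.comp_id _
    · intro s
      have hc : s.fst ≫ P.η.app K = s.snd ≫ n' := s.condition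
      have e1 : (s.fst ≫ l) ≫ P.η.app L = (s.snd ≫ g) ≫ P.φ m hm (𝟙 L) := by
        rw [Category.assoc, Category.assoc, hD.w, ← Category.assoc s.snd, ← hc, Category.assoc]
        exact congrArg (s.fst ≫ ·) hl.w
      have e2 := hmb.lift_snd _ _ e1
      have e3 := hmb.lift_fst _ _ e1
      rw [Category.comp_id] at e3
      rw [e3] at e2
      apply hD.hom_ext
      · rw [Category.assoc, h2, ← e2, Category.assoc]
      · rw [Category.assoc, h1]; exact hc
    · intro s w hw _
      exact (Category.comp_id w).symm.trans hw
  have hsq : IsPullback l n m g := by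
    have hp := hn.paste_horiz hl
    rw [← hD.w, Category.id_comp] at hp
    have hp' : IsPullback (l ≫ 𝟙 L) n (P.η.app L) (g ≫ P.φ m hm (𝟙 L)) := by
      rw [Category.comp_id]; exact hp
    exact (IsPullback.of_right hp' h2.symm hmb)
  refine ⟨hsq, ?_⟩
  intro K' D' d e f h hp hd
  have he : M.mem e := M.mem_of_isPullback hp hm
  have hψ : IsPullback h e (P.η.app K) (P.φ e he h) := P.isPullback_φ e he h
  have q1 : P.φ e he h ≫ P.φ (P.η.app K) hη l = P.φ e he d := by
    apply P.φ_uniq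
    have := (hψ.paste_horiz hl)
    rwa [hd] at this
  have q2 : f ≫ P.φ m hm (𝟙 L) = P.φ e he d := by
    apply P.φ_uniq
    have := (hp.paste_horiz hmb)
    rwa [Category.comp_id] at this
  have q := q2.trans q1.symm
  refine ⟨hD.lift _ _ q, ⟨hD.lift_fst _ _ q, ?_⟩, ?_⟩
  · apply hD.hom_ext
    · rw [Category.assoc, hD.lift_fst, Category.assoc, h2, ← hp.w, ← hd, Category.assoc]
    · rw [Category.assoc, hD.lift_snd, Category.assoc, h1]; exact hψ.w.symm
  · rintro g1 ⟨hg1, hg2⟩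
    apply hD.hom_ext
    · rw [hD.lift_fst, hg1]
    · rw [hD.lift_snd]
      apply P.φ_uniq
      have k1 : IsPullback (h ≫ l) e m (g1 ≫ g) := by rw [hd, hg1]; exact hp
      have k2 := IsPullback.of_right k1 hg2.symm hsq
      have := (k2.paste_horiz hn)
      rwa [Category.comp_id] at this

/-- AGREE subsumes SqPO with monic matches: `G ⇒ H` via the SqPO step for
the span rule `(l, r)` at `m` iff `G ⇒ H` via the AGREE step for `(l, r, η_K)` at `m`. -/
theorem sqpo_iff_agree_with_eta [HasPullbacks C]
    (M : StableSystemOfMonos C) (P : MPartialMapClassifier M)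
    (hpush : ∀ {X Y Z : C} (f : X ⟶ Y) (h : X ⟶ Z), M.mem f → HasPushout f h)
    {K L R G : C} (l : K ⟶ L) (r : K ⟶ R) (m : L ⟶ G) (hm : M.mem m)
    (hη : M.mem (P.η.app K)) (H : C) :
    SqpoStep l r m H ↔ AgreeStep M P l r (P.η.app K) hη m hm H := by
  constructor
  · rintro ⟨D, n, a, h, p, ⟨hpb, hf⟩, hpo⟩
    have hD := IsPullback.of_hasPullback (P.φ m hm (𝟙 L)) (P.φ (P.η.app K) hη l)
    have w : (l ≫ m) ≫ P.φ m hm (𝟙 L) = P.η.app K ≫ P.φ (P.η.app K) hη l := by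
      rw [Category.assoc, ← (P.isPullback_φ m hm (𝟙 L)).w, Category.id_comp]
      exact (P.isPullback_φ (P.η.app K) hη l).w
    have s1 := hD.lift_fst _ _ w
    have s2 := hD.lift_snd _ _ w
    generalize hD.lift _ _ w = n0 at s1 s2
    obtain ⟨hpb0, hf0⟩ := agree_fpc M P l m hm hη _ _ _ hD s2 s1
    obtain ⟨i, ⟨i1, i2⟩, -⟩ := hf0 l n a (𝟙 K) hpb (Category.id_comp _)
    obtain ⟨j, ⟨j1, j2⟩, -⟩ := hf l n0 _ (𝟙 K) hpb0 (Category.id_comp _)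
    rw [Category.id_comp] at i2 j2
    have ij : i ≫ j = 𝟙 D :=
      (hf l n a (𝟙 K) hpb (Category.id_comp _)).unique
        ⟨by rw [Category.assoc, j1, i1], by rw [← Category.assoc, i2, j2, Category.id_comp]⟩
        ⟨Category.id_comp _, by rw [Category.comp_id, Category.id_comp]⟩
    have ji : j ≫ i = 𝟙 _ :=
      (hf0 l n0 _ (𝟙 K) hpb0 (Category.id_comp _)).unique
        ⟨by rw [Category.assoc, i1, j1], by rw [← Category.assoc, j2, i2, Category.id_comp]⟩
        ⟨Category.id_comp _, by rw [Category.comp_id, Category.id_comp]⟩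
    refine ⟨D, a, i ≫ pullback.snd _ _, n, h, p, ?_, ?_, hpb.w.symm, hpo⟩
    · exact IsPullback.of_iso hD ⟨j, i, ji, ij⟩ (Iso.refl _) (Iso.refl _) (Iso.refl _)
        (by simp [j1]) (by simp [reassoc_of% ji]) (by simp) (by simp)
    · rw [← Category.assoc, i2, s2]
  · rintro ⟨D, g, n', n, h, p, hD, h1, h2, hpo⟩
    exact ⟨D, n, g, h, p, agree_fpc M P l m hm hη g n' n hD h1 h2, hpo⟩
end
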